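/- arXiv:2102.03855 — 4 statements merged into one kernel-verified Lean document; each statement's English description precedes it below -/
import Mathlib

section
/- Let k ≥ 1 and n ≥ 2k+4 be integers. Then ρ(L_{n,k}) > ρ(L_{n,k+1}), where ρ denotes the spectral radius. -/
open SimpleGraph

/-- `G` contains a cycle of length `l`. -/
def HasCycleLen {V : Type} (G : SimpleGraph V) (l : ℕ) : Prop :=
  ∃ (v : V) (c : G.Walk v v), c.IsCycle ∧ c.length = l

/-- The circumference of `G`: the length of a longest cycle. -/
noncomputable def circumference {V : Type} (G : SimpleGraph V) : ℕ :=
  sSup {l | HasCycleLen G l}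

/-- `G` is weakly pancyclic with girth 3: it contains a cycle of every length `l`
with `3 ≤ l ≤ c(G)`. -/
def WeaklyPancyclic3 {V : Type} (G : SimpleGraph V) : Prop :=
  HasCycleLen G 3 ∧ ∀ l : ℕ, 3 ≤ l → l ≤ circumference G → HasCycleLen G l

/-- The number of edges of `G`. -/
noncomputable def edgeCount {V : Type} (G : SimpleGraph V) : ℕ :=
  Nat.card G.edgeSet

/-- The degree of `v` in `G`. -/
noncomputable def degCount {V : Type} (G : SimpleGraph V) (v : V) : ℕ :=
  Nat.card (G.neighborSet v)

/-- The spectral radius of `G`: the largest eigenvalue of the adjacency matrix. -/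
noncomputable def specRad {V : Type} [Finite V] (G : SimpleGraph V) : ℝ :=
  letI := Fintype.ofFinite V
  letI := Classical.decEq V
  letI := Classical.decRel G.Adj
  sSup (spectrum ℝ (G.adjMatrix ℝ))

/-- The signless Laplacian spectral radius of `G`: the largest eigenvalue of `D(G) + A(G)`. -/
noncomputable def qSpecRad {V : Type} [Finite V] (G : SimpleGraph V) : ℝ :=
  letI := Fintype.ofFinite V
  letI := Classical.decEq V
  letI := Classical.decRel G.Adj
  sSup (spectrum ℝ (Matrix.diagonal (fun v => (degCount G v : ℝ)) + G.adjMatrix ℝ))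

/-- `L_{n,k} = K_1 ∨ (K_{n-k-1} + K_k)`: vertex `0` is the common vertex of a clique on
the `n - k` vertices `{0, …, n-k-1}` and a clique on the `k+1` vertices `{0} ∪ {n-k, …, n-1}`. -/
def Lgraph (n k : ℕ) : SimpleGraph (Fin n) :=
  SimpleGraph.fromRel (fun u v =>
    u.val = 0 ∨ v.val = 0 ∨ (u.val < n - k ∧ v.val < n - k) ∨
      (n - k ≤ u.val ∧ n - k ≤ v.val))

/-- `Γ_{n,t} = K_2 ∨ (K_{n-2-t} + t·K_1)`: vertices `0,1` are joined to everything,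
vertices `2, …, n-t-1` form a clique, and vertices `n-t, …, n-1` are independent. -/
def GammaGraph (n t : ℕ) : SimpleGraph (Fin n) :=
  SimpleGraph.fromRel (fun u v =>
    u.val < 2 ∨ v.val < 2 ∨ (u.val < n - t ∧ v.val < n - t))

/-- `F` is a member of the family `F_{n,k}`: there is a clique `K` on `n - k` vertices
such that each connected component of `F - K` is a clique all of whose vertices are
adjacent to one single common vertex of `K` and to no other vertex of `K`. -/
def MemF (n k : ℕ) (F : SimpleGraph (Fin n)) : Prop :=
  ∃ K : Finset (Fin n), K.card = n - k ∧ F.IsClique (↑K : Set (Fin n)) ∧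
    (∀ u v : ({x : Fin n | x ∉ K} : Set (Fin n)),
      (F.induce {x : Fin n | x ∉ K}).Reachable u v → (u = v ∨ F.Adj u.1 v.1)) ∧
    (∀ u : ({x : Fin n | x ∉ K} : Set (Fin n)), ∃! w : Fin n, w ∈ K ∧ F.Adj u.1 w) ∧
    (∀ u v : ({x : Fin n | x ∉ K} : Set (Fin n)),
      (F.induce {x : Fin n | x ∉ K}).Reachable u v →
        ∀ w ∈ K, F.Adj u.1 w → F.Adj v.1 w)

/-- `G` is a subgraph of `H` (up to relabelling): there is an injective graph
homomorphism from `G` to `H`. -/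
def IsSubgraphOf {n : ℕ} (G H : SimpleGraph (Fin n)) : Prop :=
  ∃ f : G →g H, Function.Injective f

/-!
The two graphs differ only in the vertex `v` with value `n - k - 1`, which moves from the small
clique of `L_{n,k+1}` to the large one of `L_{n,k}`. Let `x` be the positive Perron eigenvector of
`L_{n,k+1}`, with eigenvalue `ρ`. Each vertex `u` of a clique with `m` vertices besides the common
vertex `z` satisfies `(ρ + 1 - m) x u = x z`, so `x` is at least as large on the large clique as on
the small one. Moving `v` therefore increases the quadratic form `xᵀ A x`, and the Rayleigh
principle concludes.
-/

open Matrix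

section Rayleigh

variable {ι : Type*} [Fintype ι] [DecidableEq ι] {A : Matrix ι ι ℝ}

theorem posSemidef_sSup_spectrum_smul_one_sub (hA : A.IsHermitian) :
    (sSup (spectrum ℝ A) • 1 - A).PosSemidef := by
  refine posSemidef_iff_isHermitian_and_spectrum_nonneg.mpr
    ⟨(isHermitian_one.smul (IsSelfAdjoint.all _)).sub hA, ?_⟩
  rw [← Algebra.algebraMap_eq_smul_one, ← spectrum.singleton_sub_eq, Set.singleton_sub]
  rintro _ ⟨μ, hμ, rfl⟩
  exact sub_nonneg.mpr (le_csSup A.finite_real_spectrum.bddAbove hμ)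

theorem dotProduct_mulVec_le_sSup_spectrum_mul (hA : A.IsHermitian) (x : ι → ℝ) :
    x ⬝ᵥ A *ᵥ x ≤ sSup (spectrum ℝ A) * (x ⬝ᵥ x) := by
  simpa [sub_mulVec, smul_mulVec] using
    (posSemidef_sSup_spectrum_smul_one_sub hA).dotProduct_mulVec_nonneg x

theorem mulVec_eq_sSup_spectrum_smul_of_le (hA : A.IsHermitian) {x : ι → ℝ}
    (hx : sSup (spectrum ℝ A) * (x ⬝ᵥ x) ≤ x ⬝ᵥ A *ᵥ x) :
    A *ᵥ x = sSup (spectrum ℝ A) • x := by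
  have h_eq := hx.antisymm (dotProduct_mulVec_le_sSup_spectrum_mul hA x)
  have h_ker := (posSemidef_sSup_spectrum_smul_one_sub hA).dotProduct_mulVec_zero_iff x
  simp only [star_trivial, sub_mulVec, smul_mulVec, one_mulVec, dotProduct_sub, dotProduct_smul,
    smul_eq_mul, sub_eq_zero] at h_ker
  exact (h_ker.mp h_eq).symm

theorem exists_mulVec_eq_sSup_spectrum_smul [Nonempty ι] (hA : A.IsHermitian) :
    ∃ x : ι → ℝ, x ≠ 0 ∧ A *ᵥ x = sSup (spectrum ℝ A) • x := by
  have h_nonempty : (spectrum ℝ A).Nonempty :=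
    ⟨_, hA.eigenvalues_mem_spectrum_real (Classical.arbitrary ι)⟩
  have h_mem := h_nonempty.csSup_mem A.finite_real_spectrum
  rw [← spectrum_toLin', ← Module.End.hasEigenvalue_iff_mem_spectrum, spectrum_toLin'] at h_mem
  obtain ⟨x, hx⟩ := h_mem.exists_hasEigenvector
  exact ⟨x, hx.2, by simpa using hx.apply_eq_smul⟩

theorem exists_nonneg_mulVec_eq_sSup_spectrum_smul [Nonempty ι] (hA : A.IsHermitian)
    (hA_nonneg : ∀ i j, 0 ≤ A i j) :
    ∃ x : ι → ℝ, x ≠ 0 ∧ 0 ≤ x ∧ A *ᵥ x = sSup (spectrum ℝ A) • x := by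
  obtain ⟨x, hx_ne, hx⟩ := exists_mulVec_eq_sSup_spectrum_smul hA
  refine ⟨|x|, by simpa [funext_iff] using hx_ne,
    abs_nonneg x, mulVec_eq_sSup_spectrum_smul_of_le hA ?_⟩
  calc sSup (spectrum ℝ A) * (|x| ⬝ᵥ |x|) = x ⬝ᵥ A *ᵥ x := by
        rw [hx, dotProduct_smul, smul_eq_mul]
        simp only [dotProduct, Pi.abs_apply, abs_mul_abs_self]
    _ ≤ |x| ⬝ᵥ A *ᵥ |x| := by
        simp only [dotProduct, mulVec, Finset.mul_sum, Pi.abs_apply]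
        refine Finset.sum_le_sum fun i _ => Finset.sum_le_sum fun j _ => ?_
        calc x i * (A i j * x j) ≤ |x i * (A i j * x j)| := le_abs_self _
          _ = |x i| * (A i j * |x j|) := by rw [abs_mul, abs_mul, abs_of_nonneg (hA_nonneg i j)]

end Rayleigh

theorem dotProduct_mulVec_eq_two_mul_of_eq_zero_off {ι R : Type*} [Fintype ι] [CommRing R]
    {M : Matrix ι ι R} (hM : M.IsSymm) {v : ι} (hv : M v v = 0)
    (h_off : ∀ i j, i ≠ v → j ≠ v → M i j = 0) (x : ι → R) :
    x ⬝ᵥ M *ᵥ x = 2 * x v * (M *ᵥ x) v := by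
  classical
  have h_row : ∀ i ≠ v, (M *ᵥ x) i = M v i * x v := fun i hi => by
    rw [mulVec, dotProduct, Finset.sum_eq_single v
      (fun j _ hj => by rw [h_off i j hi hj, zero_mul]) (by simp), hM.apply]
  have h_rest : ∑ i ∈ {v}ᶜ, x i * (M *ᵥ x) i = x v * (M *ᵥ x) v := by
    rw [mulVec, dotProduct, Fintype.sum_eq_add_sum_compl v, hv, zero_mul, zero_add, Finset.mul_sum]
    refine Finset.sum_congr rfl fun i hi => ?_
    rw [h_row i (by simpa using hi)]
    ring
  rw [dotProduct, Fintype.sum_eq_add_sum_compl v, h_rest]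
  ring

theorem specRad_eq_sSup_spectrum {V : Type} [Fintype V] [DecidableEq V] (G : SimpleGraph V)
    [DecidableRel G.Adj] : specRad G = sSup (spectrum ℝ (G.adjMatrix ℝ)) := by
  unfold specRad
  congr!

section Eigenvector

variable {V : Type*} [Fintype V] {G : SimpleGraph V} [DecidableRel G.Adj] {x : V → ℝ} {μ : ℝ}

theorem sum_neighborFinset_eq (hx : G.adjMatrix ℝ *ᵥ x = μ • x) (u : V) :
    ∑ w ∈ G.neighborFinset u, x w = μ * x u := by
  simpa using congrFun hx u

theorem eigenvector_pos_of_connected (hG : G.Connected) (hx_ne : x ≠ 0) (hx_nonneg : 0 ≤ x)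
    (hx : G.adjMatrix ℝ *ᵥ x = μ • x) (u : V) : 0 < x u := by
  have eq_zero_of_adj {a b : V} (hab : G.Adj a b) (ha : x a = 0) : x b = 0 := by
    have h_sum := sum_neighborFinset_eq hx a
    rw [ha, mul_zero, Finset.sum_eq_zero_iff_of_nonneg fun w _ => hx_nonneg w] at h_sum
    exact h_sum b ((G.mem_neighborFinset a b).mpr hab)
  refine (hx_nonneg u).lt_of_ne' fun hu => hx_ne (funext fun w => ?_)
  obtain ⟨p⟩ := hG.preconnected u w
  induction p with
  | nil => exact hu
  | cons hab _ ih => exact ih (eq_zero_of_adj hab hu)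

theorem eigenvalue_nonneg_of_pos [Nonempty V] (hx_pos : ∀ u, 0 < x u)
    (hx : G.adjMatrix ℝ *ᵥ x = μ • x) : 0 ≤ μ := by
  let u := Classical.arbitrary V
  refine nonneg_of_mul_nonneg_left ?_ (hx_pos u)
  rw [← sum_neighborFinset_eq hx u]
  exact Finset.sum_nonneg fun w _ => (hx_pos w).le

end Eigenvector

section PendantClique

variable {V : Type*} [Fintype V] [DecidableEq V]

/-- The vertices of `S` form, together with the vertex `z` outside `S`, a clique that is attached to
the rest of `G` only at `z`: the closed neighbourhood of every vertex of `S` is `S ∪ {z}`. -/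
structure IsPendantClique (G : SimpleGraph V) [DecidableRel G.Adj] (z : V) (S : Finset V) :
    Prop where
  notMem : z ∉ S
  neighborFinset_eq : ∀ u ∈ S, G.neighborFinset u = insert z (S.erase u)

variable {G : SimpleGraph V} [DecidableRel G.Adj] {x : V → ℝ} {μ : ℝ} {z v : V} {S T : Finset V}

theorem IsPendantClique.add_one_mul_eq (hS : IsPendantClique G z S)
    (hx : G.adjMatrix ℝ *ᵥ x = μ • x) {u : V} (hu : u ∈ S) :
    (μ + 1) * x u = x z + ∑ w ∈ S, x w := by
  have h_sum := sum_neighborFinset_eq hx u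
  rw [hS.neighborFinset_eq u hu,
    Finset.sum_insert fun hz => hS.notMem (Finset.mem_of_mem_erase hz)] at h_sum
  linarith [Finset.add_sum_erase S x hu]

theorem IsPendantClique.sub_card_mul_eq (hS : IsPendantClique G z S)
    (hx : G.adjMatrix ℝ *ᵥ x = μ • x) (hμ : μ + 1 ≠ 0) {u : V} (hu : u ∈ S) :
    (μ + 1 - S.card) * x u = x z := by
  have h_const : ∀ w ∈ S, x w = x u := fun w hw =>
    mul_left_cancel₀ hμ ((hS.add_one_mul_eq hx hw).trans (hS.add_one_mul_eq hx hu).symm)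
  have h_sum := hS.add_one_mul_eq hx hu
  rw [Finset.sum_congr rfl h_const, Finset.sum_const, nsmul_eq_mul] at h_sum
  linarith

theorem IsPendantClique.apply_le_apply_of_card_le (hS : IsPendantClique G z S)
    (hT : IsPendantClique G z T) (h_card : T.card ≤ S.card) (hx_pos : ∀ u, 0 < x u)
    (hx : G.adjMatrix ℝ *ᵥ x = μ • x) {s t : V} (hs : s ∈ S) (ht : t ∈ T) : x t ≤ x s := by
  have : Nonempty V := ⟨z⟩
  have hμ : μ + 1 ≠ 0 := by linarith [eigenvalue_nonneg_of_pos hx_pos hx]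
  have hs_eq := hS.sub_card_mul_eq hx hμ hs
  have ht_eq := hT.sub_card_mul_eq hx hμ ht
  have hS_pos : 0 < μ + 1 - S.card :=
    pos_of_mul_pos_left (hs_eq ▸ hx_pos z) (hx_pos s).le
  refine le_of_mul_le_mul_left ?_ hS_pos
  calc (μ + 1 - S.card) * x t ≤ (μ + 1 - T.card) * x t := by
        gcongr
        exact (hx_pos t).le
    _ = (μ + 1 - S.card) * x s := ht_eq.trans hs_eq.symm

theorem IsPendantClique.sum_erase_lt_sum (hS : IsPendantClique G z S)
    (hT : IsPendantClique G z T) (h_card : T.card ≤ S.card) (hx_pos : ∀ u, 0 < x u)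
    (hx : G.adjMatrix ℝ *ᵥ x = μ • x) (hv : v ∈ T) : ∑ w ∈ T.erase v, x w < ∑ w ∈ S, x w := by
  have hS_nonempty : S.Nonempty :=
    Finset.card_pos.mp ((Finset.card_pos.mpr ⟨v, hv⟩).trans_le h_card)
  obtain ⟨s, hs, hs_min⟩ := S.exists_min_image x hS_nonempty
  have h_le : ∀ t ∈ T, x t ≤ x s := fun t ht =>
    hS.apply_le_apply_of_card_le hT h_card hx_pos hx hs ht
  calc ∑ w ∈ T.erase v, x w < ∑ w ∈ T, x w := by
        linarith [Finset.add_sum_erase T x hv, hx_pos v]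
    _ ≤ T.card • x s := Finset.sum_le_card_nsmul T x (x s) h_le
    _ ≤ S.card • x s := nsmul_le_nsmul_left (hx_pos s).le h_card
    _ ≤ ∑ w ∈ S, x w := Finset.card_nsmul_le_sum S x (x s) hs_min

end PendantClique

section Move

variable {V : Type} [Fintype V] {G H : SimpleGraph V} [DecidableRel G.Adj] [DecidableRel H.Adj]
  {v : V}

theorem specRad_lt_of_adj_iff_off {x : V → ℝ}
    (hGH : ∀ u w, u ≠ v → w ≠ v → (G.Adj u w ↔ H.Adj u w))
    (hx : G.adjMatrix ℝ *ᵥ x = specRad G • x) (hx_pos : 0 < x v)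
    (h_sum : ∑ w ∈ G.neighborFinset v, x w < ∑ w ∈ H.neighborFinset v, x w) :
    specRad G < specRad H := by
  classical
  have h_diff : x ⬝ᵥ (H.adjMatrix ℝ - G.adjMatrix ℝ) *ᵥ x =
      2 * x v * ((H.adjMatrix ℝ - G.adjMatrix ℝ) *ᵥ x) v :=
    dotProduct_mulVec_eq_two_mul_of_eq_zero_off (H.isSymm_adjMatrix.sub G.isSymm_adjMatrix)
      (by simp) (fun u w hu hw => by simp [hGH u w hu hw]) x
  simp only [sub_mulVec, dotProduct_sub, Pi.sub_apply, adjMatrix_mulVec_apply] at h_diff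
  have h_xx : 0 < x ⬝ᵥ x :=
    dotProduct_self_star_pos_iff.mpr fun h => hx_pos.ne' (congrFun h v)
  refine lt_of_mul_lt_mul_right ?_ h_xx.le
  calc specRad G * (x ⬝ᵥ x) = x ⬝ᵥ G.adjMatrix ℝ *ᵥ x := by
        rw [hx, dotProduct_smul, smul_eq_mul]
    _ < x ⬝ᵥ H.adjMatrix ℝ *ᵥ x := by
        linarith [mul_pos hx_pos (sub_pos.mpr h_sum)]
    _ ≤ specRad H * (x ⬝ᵥ x) := by
        rw [specRad_eq_sSup_spectrum]
        exact dotProduct_mulVec_le_sSup_spectrum_mul (H.isHermitian_adjMatrix ℝ) x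

theorem IsPendantClique.specRad_lt_of_move [DecidableEq V] {z : V} {S T : Finset V}
    (hS : IsPendantClique G z S) (hT : IsPendantClique G z T) (hG : G.Connected)
    (h_card : T.card ≤ S.card) (hv : v ∈ T)
    (hGH : ∀ u w, u ≠ v → w ≠ v → (G.Adj u w ↔ H.Adj u w))
    (hHv : H.neighborFinset v = insert z S) : specRad G < specRad H := by
  have : Nonempty V := ⟨z⟩
  obtain ⟨x, hx_ne, hx_nonneg, hx⟩ := exists_nonneg_mulVec_eq_sSup_spectrum_smul
    (G.isHermitian_adjMatrix ℝ) fun i j => by rw [adjMatrix_apply]; positivity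
  have hx_pos := eigenvector_pos_of_connected hG hx_ne hx_nonneg hx
  rw [← specRad_eq_sSup_spectrum] at hx
  refine specRad_lt_of_adj_iff_off hGH hx (hx_pos v) ?_
  rw [hHv, hT.neighborFinset_eq v hv, Finset.sum_insert hS.notMem,
    Finset.sum_insert fun hz => hT.notMem (Finset.mem_of_mem_erase hz)]
  exact add_lt_add_right (hS.sum_erase_lt_sum hT h_card hx_pos hx hv) _

end Move

section Lgraph

variable {n k : ℕ}

theorem Lgraph_adj {u w : Fin n} :
    (Lgraph n k).Adj u w ↔ u ≠ w ∧ (u.val = 0 ∨ w.val = 0 ∨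
      (u.val < n - k ∧ w.val < n - k) ∨ (n - k ≤ u.val ∧ n - k ≤ w.val)) := by
  rw [Lgraph, fromRel_adj]
  tauto

theorem Lgraph_adj_iff_succ {u w : Fin n} (hu : u.val ≠ n - (k + 1)) (hw : w.val ≠ n - (k + 1)) :
    (Lgraph n (k + 1)).Adj u w ↔ (Lgraph n k).Adj u w := by
  simp only [Lgraph_adj]
  grind

variable [NeZero n]

theorem Lgraph_connected : (Lgraph n k).Connected := by
  refine (connected_iff_exists_forall_reachable _).mpr ⟨0, fun w => ?_⟩
  by_cases hw : 0 = w
  · exact hw ▸ Reachable.rfl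
  · exact (Lgraph_adj.mpr ⟨hw, Or.inl (Fin.val_zero n)⟩).reachable

variable [DecidableRel (Lgraph n k).Adj] {v : Fin n}

theorem isPendantClique_Lgraph_Ioo (hv : v.val = n - k) :
    IsPendantClique (Lgraph n k) 0 (Finset.Ioo 0 v) where
  notMem := by simp
  neighborFinset_eq u hu := by
    ext w
    simp only [mem_neighborFinset, Lgraph_adj, Finset.mem_insert, Finset.mem_erase,
      Finset.mem_Ioo, Fin.lt_def, Fin.ext_iff, Fin.val_zero, ne_eq] at hu ⊢
    omega

theorem isPendantClique_Lgraph_Ici (hv : v.val = n - k) (hv_pos : 0 < v) :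
    IsPendantClique (Lgraph n k) 0 (Finset.Ici v) where
  notMem := fun h => (Finset.mem_Ici.mp h).not_gt hv_pos
  neighborFinset_eq u hu := by
    ext w
    simp only [mem_neighborFinset, Lgraph_adj, Finset.mem_insert, Finset.mem_erase,
      Finset.mem_Ici, Fin.lt_def, Fin.le_def, Fin.ext_iff, Fin.val_zero, ne_eq] at hu hv_pos ⊢
    omega

theorem neighborFinset_Lgraph_last (hv : v.val = n - (k + 1)) (hv_pos : 0 < v) :
    (Lgraph n k).neighborFinset v = insert 0 (Finset.Ioo 0 v) := by
  ext w
  simp only [mem_neighborFinset, Lgraph_adj, Finset.mem_insert, Finset.mem_Ioo,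
    Fin.lt_def, Fin.ext_iff, Fin.val_zero, ne_eq] at hv_pos ⊢
  omega

end Lgraph

theorem specRad_L_lt_general (n k : ℕ) (hn : 2 * k + 2 < n) :
    specRad (Lgraph n (k + 1)) < specRad (Lgraph n k) := by
  classical
  have : NeZero n := ⟨by omega⟩
  let v : Fin n := ⟨n - (k + 1), by omega⟩
  have hv_pos : 0 < v := Fin.lt_def.mpr (by simp only [v, Fin.val_zero]; omega)
  have h_card : (Finset.Ici v).card ≤ (Finset.Ioo 0 v).card := by
    simp only [Fin.card_Ici, Fin.card_Ioo, v, Fin.val_zero]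
    omega
  exact (isPendantClique_Lgraph_Ioo rfl).specRad_lt_of_move
    (isPendantClique_Lgraph_Ici rfl hv_pos) Lgraph_connected h_card (Finset.mem_Ici.mpr le_rfl)
    (fun u w hu hw => Lgraph_adj_iff_succ (Fin.val_ne_of_ne hu) (Fin.val_ne_of_ne hw))
    (neighborFinset_Lgraph_last rfl hv_pos)

/-- Lemma 3.6: `ρ(L_{n,k}) > ρ(L_{n,k+1})` for `n ≥ 2k+4`. -/
theorem specRad_L_lt (n k : ℕ) (hk : 1 ≤ k) (hn : 2 * k + 4 ≤ n) :
    specRad (Lgraph n (k + 1)) < specRad (Lgraph n k) :=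
  specRad_L_lt_general n k (by omega)
end

section
/- Let k ≥ 1 and n ≥ 2k+4 be integers. Then q(L_{n,k}) > q(L_{n,k+1}), where q denotes the signless Laplacian spectral radius. -/
open SimpleGraph

/-!
Partition `L_{n,k}` into the common vertex and the two cliques with it removed, of sizes
`a = n - k - 1` and `b = k`. The partition is equitable, so a zero `q` of the characteristic
polynomial `p_{a,b}` of the quotient of `D + A` yields an eigenvector which is constant on each
part; for `q > 2 * max a b - 1` this eigenvector is positive, and therefore `q` is the signless
Laplacian spectral radius. The difference `p_{a-1,b+1} - p_{a,b}` is the linear polynomial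
`4 (a - b - 1) (q + 1 - a - b)`, so `p_{a-1,b+1}` is positive at the radius `q` of `L_{n,k}`. It is
nonpositive at `2 (a - 1)`, the radius of the larger clique of `L_{n,k+1}`, hence it vanishes
at some point of `[2 (a - 1), q)`, which is the radius of `L_{n,k+1}`.
-/

section Matrix

open Matrix

variable {ι 𝕜 : Type*} [Fintype ι] [Field 𝕜] [LinearOrder 𝕜] [IsStrictOrderedRing 𝕜]
  {M : Matrix ι ι 𝕜} {x : ι → 𝕜}

theorem abs_le_of_mulVec_le_smul_of_mulVec_eq_smul (hM : ∀ i j, 0 ≤ M i j) (hx : ∀ i, 0 < x i)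
    {c : 𝕜} (hMx : M *ᵥ x ≤ c • x) {y : ι → 𝕜} (hy : y ≠ 0) {μ : 𝕜} (hMy : M *ᵥ y = μ • y) :
    |μ| ≤ c := by
  obtain ⟨j, hj⟩ := Function.ne_iff.mp hy
  -- Compare the coordinates at an index where `|y i| / x i` is maximal.
  obtain ⟨i, -, hi⟩ := Finset.univ.exists_max_image (fun i ↦ |y i| / x i) ⟨j, Finset.mem_univ j⟩
  set r := |y i| / x i
  have hyr (l : ι) : |y l| ≤ r * x l := (div_le_iff₀ (hx l)).mp (hi l (Finset.mem_univ l))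
  have hyi : |y i| = r * x i := (div_mul_cancel₀ _ (hx i).ne').symm
  have hr : 0 < r := pos_of_mul_pos_left ((abs_pos.mpr hj).trans_le (hyr j)) (hx j).le
  refine le_of_mul_le_mul_right ?_ (mul_pos hr (hx i))
  calc |μ| * (r * x i) = |∑ l, M i l * y l| := by
        rw [← hyi, ← abs_mul]
        exact congrArg _ (congrFun hMy i).symm
    _ ≤ ∑ l, M i l * |y l| := by
        refine (Finset.abs_sum_le_sum_abs _ _).trans_eq (Finset.sum_congr rfl fun l _ ↦ ?_)
        rw [abs_mul, abs_of_nonneg (hM i l)]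
    _ ≤ ∑ l, M i l * (r * x l) :=
        Finset.sum_le_sum fun l _ ↦ mul_le_mul_of_nonneg_left (hyr l) (hM i l)
    _ = r * (M *ᵥ x) i := by
        simp only [mulVec, dotProduct, Finset.mul_sum, mul_left_comm]
    _ ≤ r * (c * x i) := mul_le_mul_of_nonneg_left (hMx i) hr.le
    _ = c * (r * x i) := mul_left_comm _ _ _

theorem isGreatest_spectrum_of_mulVec_eq_smul [DecidableEq ι] [Nonempty ι]
    (hM : ∀ i j, 0 ≤ M i j) (hx : ∀ i, 0 < x i) {q : 𝕜} (hMx : M *ᵥ x = q • x) :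
    IsGreatest (spectrum 𝕜 M) q := by
  have hx0 : x ≠ 0 := fun h ↦ (hx (Classical.arbitrary ι)).ne' (congrFun h _)
  simp only [← spectrum_toLin', IsGreatest, upperBounds, Set.mem_ofPred_eq,
    ← Module.End.hasEigenvalue_iff_mem_spectrum]
  refine ⟨Module.End.hasEigenvalue_of_hasEigenvector ⟨Module.End.mem_eigenspace_iff.mpr ?_, hx0⟩,
    fun μ hμ ↦ ?_⟩
  · rw [toLin'_apply, hMx]
  · obtain ⟨y, hy⟩ := hμ.exists_hasEigenvector
    exact (le_abs_self μ).trans (abs_le_of_mulVec_le_smul_of_mulVec_eq_smul hM hx hMx.le hy.2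
      (by rw [← toLin'_apply, hy.apply_eq_smul]))

end Matrix

section SignlessLaplacian

open Matrix

theorem degMatrix_add_adjMatrix_mulVec_apply {V R : Type*} [Fintype V] [DecidableEq V]
    [NonAssocSemiring R] (G : SimpleGraph V) [DecidableRel G.Adj] (x : V → R) (v : V) :
    ((G.degMatrix R + G.adjMatrix R) *ᵥ x) v = ∑ w ∈ G.neighborFinset v, (x v + x w) := by
  rw [add_mulVec, Pi.add_apply, degMatrix_mulVec_apply, adjMatrix_mulVec_apply,
    Finset.sum_add_distrib, Finset.sum_const, card_neighborFinset_eq_degree, nsmul_eq_mul]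

theorem degCount_eq_degree {V : Type} (G : SimpleGraph V) (v : V) [Fintype (G.neighborSet v)] :
    degCount G v = G.degree v := by
  rw [degCount, Nat.card_eq_fintype_card, card_neighborSet_eq_degree]

variable {V : Type} [Fintype V] (G : SimpleGraph V) [DecidableRel G.Adj]

theorem qSpecRad_eq_sSup_spectrum [DecidableEq V] :
    qSpecRad G = sSup (spectrum ℝ (G.degMatrix ℝ + G.adjMatrix ℝ)) := by
  simp only [qSpecRad, degMatrix, ← degCount_eq_degree]
  congr!

theorem qSpecRad_eq_of_sum_neighborFinset [Nonempty V] {x : V → ℝ} (hx : ∀ v, 0 < x v) {q : ℝ}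
    (h : ∀ v, ∑ w ∈ G.neighborFinset v, (x v + x w) = q * x v) : qSpecRad G = q := by
  classical
  rw [qSpecRad_eq_sSup_spectrum]
  refine (isGreatest_spectrum_of_mulVec_eq_smul (fun v w ↦ ?_) hx ?_).csSup_eq
  · rw [Matrix.add_apply, degMatrix, diagonal_apply, adjMatrix_apply]
    positivity
  · ext v
    rw [degMatrix_add_adjMatrix_mulVec_apply, h, Pi.smul_apply, smul_eq_mul]

end SignlessLaplacian

section QuotientCharpoly

/-- The characteristic polynomial of `!![a + b, a, b; 1, 2 * a - 1, 0; 1, 0, 2 * b - 1]`, evaluated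
at `q`. This is the quotient of the signless Laplacian of `L_{a+b+1,b}` by the partition into the
common vertex and the remaining `a` and `b` vertices of the two cliques. The sizes are taken in `ℝ`
so that no subtraction is truncated. -/
def quotientCharpoly (a b q : ℝ) : ℝ :=
  (q - (a + b)) * (q + 1 - 2 * a) * (q + 1 - 2 * b) - a * (q + 1 - 2 * b) - b * (q + 1 - 2 * a)

variable {a b q : ℝ}

theorem continuous_quotientCharpoly (a b : ℝ) : Continuous (quotientCharpoly a b) := by
  unfold quotientCharpoly
  fun_prop

theorem quotientCharpoly_add_one_right (a b q : ℝ) :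
    quotientCharpoly a (b + 1) q
      = quotientCharpoly (a + 1) b q + 4 * (a - b) * (q - a - b) := by
  unfold quotientCharpoly
  ring

theorem quotientCharpoly_add_one_right_pos (hba : b < a) (hq : a + b < q)
    (h : quotientCharpoly (a + 1) b q = 0) : 0 < quotientCharpoly a (b + 1) q := by
  rw [quotientCharpoly_add_one_right, h, zero_add]
  exact mul_pos (by linarith) (by linarith)

theorem quotientCharpoly_two_mul_left_nonpos (hb : 0 ≤ b) (hba : b ≤ a) :
    quotientCharpoly a b (2 * a) ≤ 0 := by
  have h : quotientCharpoly a b (2 * a) = -(2 * b * (a - b + 1)) := by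
    unfold quotientCharpoly
    ring
  rw [h, neg_nonpos]
  exact mul_nonneg (by positivity) (by linarith)

theorem quotientCharpoly_two_mul_add_add_one_pos (ha : 0 ≤ a) (hb : 0 ≤ b) :
    0 < quotientCharpoly a b (2 * (a + b) + 1) := by
  have h : quotientCharpoly a b (2 * (a + b) + 1)
      = 4 * a * b * (a + b + 3) + 2 * a * (a + 3) + 2 * b * (b + 3) + 4 := by
    unfold quotientCharpoly
    ring
  rw [h]
  positivity

theorem exists_quotientCharpoly_eq_zero (hb : 0 ≤ b) (hba : b ≤ a) (hq : 2 * a ≤ q)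
    (hpos : 0 < quotientCharpoly a b q) :
    ∃ r ∈ Set.Ico (2 * a) q, quotientCharpoly a b r = 0 :=
  intermediate_value_Ico hq (continuous_quotientCharpoly a b).continuousOn
    ⟨quotientCharpoly_two_mul_left_nonpos hb hba, hpos⟩

end QuotientCharpoly

section Fin

variable {a b : ℕ}

theorem forall_fin_add_add_one {p : Fin (a + b + 1) → Prop} :
    (∀ v, p v) ↔ p 0 ∧ (∀ i : Fin a, p (i.castAdd b).succ) ∧ ∀ j : Fin b, p (j.natAdd a).succ := by
  rw [Fin.forall_fin_succ, Fin.forall_fin_add]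

theorem sum_neighborFinset_fin_add_add_one {R : Type*} [AddCommMonoid R]
    (G : SimpleGraph (Fin (a + b + 1))) [DecidableRel G.Adj] (v : Fin (a + b + 1))
    (f : Fin (a + b + 1) → R) :
    ∑ w ∈ G.neighborFinset v, f w = (if G.Adj v 0 then f 0 else 0) +
      ((∑ i : Fin a, if G.Adj v (i.castAdd b).succ then f (i.castAdd b).succ else 0) +
        ∑ j : Fin b, if G.Adj v (j.natAdd a).succ then f (j.natAdd a).succ else 0) := by
  rw [neighborFinset_eq_filter, Finset.sum_filter, Fin.sum_univ_succ, Fin.sum_univ_add]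

theorem sum_ite_eq_zero_const {ι R : Type*} [Fintype ι] [DecidableEq ι] [Ring R] (i : ι) (c : R) :
    ∑ j, (if i = j then 0 else c) = (Fintype.card ι - 1) * c := by
  rw [Finset.sum_ite, Finset.sum_const_zero, zero_add, Finset.filter_ne, Finset.sum_const,
    Finset.card_erase_of_mem (Finset.mem_univ i), Finset.card_univ, nsmul_eq_mul,
    Nat.cast_pred (Fintype.card_pos_iff.mpr ⟨i⟩)]

end Fin

section Lgraph

variable {a b : ℕ}

theorem Lgraph_adj_zero_succ (v : Fin (a + b)) : (Lgraph (a + b + 1) b).Adj 0 v.succ := by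
  simp [Lgraph, (Fin.succ_ne_zero v).symm]

theorem Lgraph_adj_castAdd_castAdd {i j : Fin a} :
    (Lgraph (a + b + 1) b).Adj (i.castAdd b).succ (j.castAdd b).succ ↔ i ≠ j := by
  simp only [Lgraph, fromRel_adj, Fin.val_succ, Fin.val_castAdd, ne_eq, Fin.ext_iff]
  omega

theorem Lgraph_adj_natAdd_natAdd {i j : Fin b} :
    (Lgraph (a + b + 1) b).Adj (i.natAdd a).succ (j.natAdd a).succ ↔ i ≠ j := by
  simp only [Lgraph, fromRel_adj, Fin.val_succ, Fin.val_natAdd, ne_eq, Fin.ext_iff]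
  omega

theorem Lgraph_not_adj_castAdd_natAdd (i : Fin a) (j : Fin b) :
    ¬ (Lgraph (a + b + 1) b).Adj (i.castAdd b).succ (j.natAdd a).succ := by
  simp only [Lgraph, fromRel_adj, Fin.val_succ, Fin.val_castAdd, Fin.val_natAdd]
  omega

/-- The vector on the vertices of `L_{a+b+1,b}` which is constant on the parts of its equitable
partition: `s` at the common vertex, `t` on the remaining `a` vertices of the first clique and `u`
on the remaining `b` vertices of the second. -/
def partVector (a b : ℕ) (s t u : ℝ) : Fin (a + b + 1) → ℝ :=
  Fin.cons s (Fin.append (fun _ : Fin a ↦ t) (fun _ : Fin b ↦ u))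

section PartVector

variable (s t u : ℝ)

@[simp]
theorem partVector_zero : partVector a b s t u 0 = s := rfl

@[simp]
theorem partVector_castAdd (i : Fin a) : partVector a b s t u (i.castAdd b).succ = t := by
  simp [partVector]

@[simp]
theorem partVector_natAdd (j : Fin b) : partVector a b s t u (j.natAdd a).succ = u := by
  simp [partVector]

variable [DecidableRel (Lgraph (a + b + 1) b).Adj]

theorem sum_neighborFinset_partVector_zero :
    ∑ w ∈ (Lgraph (a + b + 1) b).neighborFinset 0,
      (partVector a b s t u 0 + partVector a b s t u w) = a * (s + t) + b * (s + u) := by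
  simp [sum_neighborFinset_fin_add_add_one, Lgraph_adj_zero_succ, mul_add]

theorem sum_neighborFinset_partVector_castAdd (i : Fin a) :
    ∑ w ∈ (Lgraph (a + b + 1) b).neighborFinset (i.castAdd b).succ,
      (partVector a b s t u (i.castAdd b).succ + partVector a b s t u w)
      = (t + s) + (a - 1) * (t + t) := by
  simp [sum_neighborFinset_fin_add_add_one, (Lgraph_adj_zero_succ _).symm,
    Lgraph_adj_castAdd_castAdd, Lgraph_not_adj_castAdd_natAdd, sum_ite_eq_zero_const]

theorem sum_neighborFinset_partVector_natAdd (j : Fin b) :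
    ∑ w ∈ (Lgraph (a + b + 1) b).neighborFinset (j.natAdd a).succ,
      (partVector a b s t u (j.natAdd a).succ + partVector a b s t u w)
      = (u + s) + (b - 1) * (u + u) := by
  simp [sum_neighborFinset_fin_add_add_one, (Lgraph_adj_zero_succ _).symm,
    Lgraph_adj_natAdd_natAdd, mt Adj.symm (Lgraph_not_adj_castAdd_natAdd _ j),
    sum_ite_eq_zero_const]

end PartVector

theorem qSpecRad_Lgraph_of_quotientCharpoly_eq_zero {n : ℕ} (hn : n = a + b + 1) {q : ℝ}
    (ha : 2 * a - 1 < q) (hb : 2 * b - 1 < q) (hq : quotientCharpoly a b q = 0) :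
    qSpecRad (Lgraph n b) = q := by
  classical
  subst hn
  have hA : 0 < q + 1 - 2 * a := by linarith
  have hB : 0 < q + 1 - 2 * b := by linarith
  refine qSpecRad_eq_of_sum_neighborFinset _ (x := partVector a b
    ((q + 1 - 2 * a) * (q + 1 - 2 * b)) (q + 1 - 2 * b) (q + 1 - 2 * a)) ?_ ?_ <;>
    refine forall_fin_add_add_one.mpr ⟨?_, fun i ↦ ?_, fun j ↦ ?_⟩
  · simpa only [partVector_zero] using mul_pos hA hB
  · simpa only [partVector_castAdd] using hB
  · simpa only [partVector_natAdd] using hA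
  · rw [sum_neighborFinset_partVector_zero, partVector_zero]
    unfold quotientCharpoly at hq
    linear_combination -hq
  · rw [sum_neighborFinset_partVector_castAdd, partVector_castAdd]
    ring
  · rw [sum_neighborFinset_partVector_natAdd, partVector_natAdd]
    ring

end Lgraph

theorem qSpecRad_L_lt_general (n k : ℕ) (hn : 2 * k + 3 ≤ n) :
    qSpecRad (Lgraph n (k + 1)) < qSpecRad (Lgraph n k) := by
  obtain ⟨a, rfl⟩ : ∃ a, n = a + 1 + k + 1 := ⟨n - k - 2, by omega⟩
  have hk : (0 : ℝ) ≤ k := k.cast_nonneg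
  have hka : (k : ℝ) + 1 ≤ a := by exact_mod_cast (by omega : k + 1 ≤ a)
  obtain ⟨q, ⟨haq, -⟩, hq⟩ := exists_quotientCharpoly_eq_zero (a := a + 1) hk (by linarith)
    (by linarith) (quotientCharpoly_two_mul_add_add_one_pos (by linarith) hk)
  obtain ⟨r, ⟨har, hrq⟩, hr⟩ := exists_quotientCharpoly_eq_zero (by linarith) hka (by linarith)
    (quotientCharpoly_add_one_right_pos (by linarith) (by linarith) hq)
  have hL : qSpecRad (Lgraph (a + 1 + k + 1) k) = q :=
    qSpecRad_Lgraph_of_quotientCharpoly_eq_zero rfl (by push_cast; linarith) (by linarith)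
      (by exact_mod_cast hq)
  have hL' : qSpecRad (Lgraph (a + 1 + k + 1) (k + 1)) = r :=
    qSpecRad_Lgraph_of_quotientCharpoly_eq_zero (a := a) (by omega) (by linarith)
      (by push_cast; linarith) (by exact_mod_cast hr)
  rwa [hL, hL']

/-- Lemma 3.6: `q(L_{n,k}) > q(L_{n,k+1})` for `n ≥ 2k+4`. -/
theorem qSpecRad_L_lt (n k : ℕ) (hk : 1 ≤ k) (hn : 2 * k + 4 ≤ n) :
    qSpecRad (Lgraph n (k + 1)) < qSpecRad (Lgraph n k) :=
  qSpecRad_L_lt_general n k (by omega)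
end

section
/- Let G be a simple graph on n ≥ 1 vertices containing no cycle of even length. Then e(G) ≤ 3(n−1)/2. -/
open SimpleGraph

/-! Fix a spanning forest `F` of `G` and a two-colouring of `F`. Since the cycle closed by an edge
`f ∉ F` is odd, the `F`-path joining the ends of `f` has even length, hence at least two edges, and
`f` is monochromatic. No `e ∈ F` lies on the `F`-paths of two different edges `f, f' ∉ F`: otherwise
`f` and `f'` both join the two parts into which deleting `e` splits a component of `F`, and together
with an `F`-path inside each part they form a cycle. These two paths have the same parity because
`f` and `f'` are monochromatic, so the cycle is even. Double counting the pairs `(f, e)` with `e` on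
the `F`-path of `f` gives `2 |E(G) \ E(F)| ≤ |E(F)| ≤ n - 1`.
-/

section

variable {V : Type*} {G F H : SimpleGraph V}

/-- Every cycle of `G` is odd. This is the universe-polymorphic form, in terms of walks, of the
absence of even cycle lengths in the sense of `HasCycleLen`. -/
def OnlyOddCycles (G : SimpleGraph V) : Prop :=
  ∀ ⦃v : V⦄ (c : G.Walk v v), c.IsCycle → Odd c.length

/-- The edge `e` separates the two ends of `f` in `F`: they are disconnected once `e` is deleted
from `F`. If `F` is a forest connecting the ends of `f ∉ F`, this says that `e` lies on the
fundamental cycle of `f`. -/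
def Separates (F : SimpleGraph V) (f e : Sym2 V) : Prop :=
  f.lift ⟨fun u v ↦ ¬ (F.deleteEdges {e}).Reachable u v, by simp [reachable_comm]⟩

lemma separates_mk {u v : V} {e : Sym2 V} :
    Separates F s(u, v) e ↔ ¬ (F.deleteEdges {e}).Reachable u v :=
  Iff.rfl

lemma reachable_deleteEdges_singleton_or {w x y : V} (h : F.Reachable w x) :
    (F.deleteEdges {s(x, y)}).Reachable w x ∨ (F.deleteEdges {s(x, y)}).Reachable w y := by
  obtain ⟨p⟩ := h
  induction p with
  | nil => exact .inl .rfl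
  | @cons w z x hwz p ih =>
    by_cases he : s(w, z) = s(x, y)
    · rcases Sym2.eq_iff.mp he with ⟨rfl, -⟩ | ⟨rfl, -⟩
      exacts [.inl .rfl, .inr .rfl]
    · have hadj : (F.deleteEdges {s(x, y)}).Adj w z := deleteEdges_adj.mpr ⟨hwz, he⟩
      exact ih.imp hadj.reachable.trans hadj.reachable.trans

lemma Separates.exists_ends {u v x y : V} (h : Separates F s(u, v) s(x, y))
    (huv : F.Reachable u v) :
    ∃ a b, s(u, v) = s(a, b) ∧ (F.deleteEdges {s(x, y)}).Reachable a x ∧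
      (F.deleteEdges {s(x, y)}).Reachable b y := by
  rw [separates_mk] at h
  obtain ⟨p⟩ := huv
  have hx : x ∈ p.support :=
    p.fst_mem_support_of_mem_edges (p.mem_edges_of_not_reachable_deleteEdges h)
  classical
  have hu := reachable_deleteEdges_singleton_or (y := y) (p.takeUntil x hx).reachable
  have hv := reachable_deleteEdges_singleton_or (y := y) (p.dropUntil x hx).reverse.reachable
  rcases hu with hux | huy <;> rcases hv with hvx | hvy
  · exact absurd (hux.trans hvx.symm) h
  · exact ⟨u, v, rfl, hux, hvy⟩
  · exact ⟨v, u, Sym2.eq_swap, hvx, huy⟩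
  · exact absurd (huy.trans hvy.symm) h

lemma separates_of_mem_edges (hF : F.IsAcyclic) {u v : V} {p : F.Walk u v} (hp : p.IsPath)
    {e : Sym2 V} (he : e ∈ p.edges) : Separates F s(u, v) e := by
  rw [separates_mk]
  intro h
  obtain ⟨q, hq⟩ := h.exists_isPath
  have hqp : q.mapLe (F.deleteEdges_le {e}) = p :=
    congrArg Subtype.val ((hF.subsingleton_path u v).elim ⟨_, hq.mapLe _⟩ ⟨p, hp⟩)
  rw [← hqp, Walk.edges_mapLe_eq_edges] at he
  simpa using q.edges_subset_edgeSet he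

lemma two_le_ncard_separates [Finite F.edgeSet] (hF : F.IsAcyclic) {u v : V}
    (huv : F.Reachable u v) (hne : u ≠ v) (hnadj : ¬ F.Adj u v) :
    2 ≤ {e ∈ F.edgeSet | Separates F s(u, v) e}.ncard := by
  obtain ⟨p, hp⟩ := huv.exists_isPath
  have hlen : 2 ≤ p.length := by
    have h0 : p.length ≠ 0 := fun h ↦ hne (p.eq_of_length_eq_zero h)
    have h1 : p.length ≠ 1 := fun h ↦ hnadj (p.adj_of_length_eq_one h)
    lia
  classical
  calc
    2 ≤ p.edges.toFinset.card := by
      rwa [List.toFinset_card_of_nodup hp.isTrail.edges_nodup, p.length_edges]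
    _ = (p.edges.toFinset : Set (Sym2 V)).ncard := (Set.ncard_coe_finset _).symm
    _ ≤ _ := Set.ncard_le_ncard fun e he ↦ by
      rw [List.coe_toFinset] at he
      exact ⟨p.edges_subset_edgeSet he, separates_of_mem_edges hF hp he⟩

lemma OnlyOddCycles.coloring_eq_of_adj (hG : OnlyOddCycles G) (hHG : H ≤ G)
    (c : H.Coloring Bool) {u v : V} (huv : G.Adj u v) (hHuv : ¬ H.Adj u v)
    (hreach : H.Reachable u v) : c u = c v := by
  obtain ⟨p, hp⟩ := hreach.symm.exists_isPath
  have hcycle : (Walk.cons huv (p.mapLe hHG)).IsCycle := by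
    refine (Walk.cons_isCycle_iff _ _).mpr ⟨hp.mapLe hHG, fun hmem ↦ hHuv ?_⟩
    rw [Walk.edges_mapLe_eq_edges] at hmem
    exact p.adj_of_mem_edges hmem
  have heven : Even p.length := by
    simpa [Nat.odd_add_one] using hG _ hcycle
  exact (Bool.eq_iff_iff.mpr ((c.even_length_iff_congr p).mp heven)).symm

lemma OnlyOddCycles.edge_eq_of_reachable (hG : OnlyOddCycles G) (hHG : H ≤ G)
    (c : H.Coloring Bool) {u v u' v' : V} (huv : G.Adj u v) (huv' : G.Adj u' v')
    (hc : c u = c v) (hc' : c u' = c v') (hu : H.Reachable u u') (hv : H.Reachable v v')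
    (hnot : ¬ H.Reachable u v) : s(u, v) = s(u', v') := by
  by_contra hne
  obtain ⟨p, hp⟩ := hv.exists_isPath
  obtain ⟨q, hq⟩ := hu.symm.exists_isPath
  have hdisj {w : V} (hwp : w ∈ p.support) (hwq : w ∈ q.support) : False := by
    classical
    exact hnot ((q.dropUntil w hwq).reachable.symm.trans (p.takeUntil w hwp).reachable.symm)
  have hP : (Walk.cons huv (p.mapLe hHG)).IsPath :=
    (hp.mapLe hHG).cons (by simpa using fun h ↦ hdisj h q.end_mem_support)
  have hQ : (Walk.cons huv'.symm (q.mapLe hHG)).IsPath :=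
    (hq.mapLe hHG).cons (by simpa using hdisj p.end_mem_support)
  have hcycle : ((Walk.cons huv (p.mapLe hHG)).append
      (Walk.cons huv'.symm (q.mapLe hHG))).IsCycle := by
    refine hP.isCycle_append hQ (by simpa [List.disjoint_left] using fun w ↦ hdisj) ?_
    by_contra! hlen
    have hp0 : p.length = 0 := by simpa using hlen.1
    have hq0 : q.length = 0 := by simpa using hlen.2
    exact hne (by rw [Walk.eq_of_length_eq_zero hp0, Walk.eq_of_length_eq_zero hq0])
  have hparity : Even p.length ↔ Even q.length := by
    rw [c.even_length_iff_congr, c.even_length_iff_congr, hc, hc']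
    exact iff_comm
  have hodd := hG _ hcycle
  simp only [Walk.length_append, Walk.length_cons, Walk.length_mapLe] at hodd
  grind

/-- `F` is a spanning forest of `G`: an acyclic subgraph with the same connected components. -/
structure IsSpanningForest (F G : SimpleGraph V) : Prop where
  le : F ≤ G
  isAcyclic : F.IsAcyclic
  reachable_of_adj ⦃u v : V⦄ : G.Adj u v → F.Reachable u v

lemma exists_isSpanningForest (G : SimpleGraph V) : ∃ F, IsSpanningForest F G := by
  obtain ⟨F, hle, hF, hreach⟩ := G.exists_isAcyclic_reachable_eq_le
  exact ⟨F, hle, hF, fun u v huv ↦ hreach ▸ huv.reachable⟩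

lemma IsSpanningForest.subsingleton_separates (hF : IsSpanningForest F G) (hG : OnlyOddCycles G)
    (e : Sym2 V) : {f ∈ G.edgeSet \ F.edgeSet | Separates F f e}.Subsingleton := by
  induction e with | _ x y
  let c : F.Coloring Bool := hF.isAcyclic.colorable_two.toColoring (by simp)
  let cH : (F.deleteEdges {s(x, y)}).Coloring Bool := c.comp (.ofLE (F.deleteEdges_le _))
  have hends {f : Sym2 V} (hf : f ∈ G.edgeSet \ F.edgeSet) (hsep : Separates F f s(x, y)) :
      ∃ a b, f = s(a, b) ∧ G.Adj a b ∧ c a = c b ∧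
        (F.deleteEdges {s(x, y)}).Reachable a x ∧ (F.deleteEdges {s(x, y)}).Reachable b y := by
    induction f with | _ u v
    obtain ⟨a, b, hab, hax, hby⟩ := hsep.exists_ends (hF.reachable_of_adj hf.1)
    rw [hab] at hf
    exact ⟨a, b, hab, hf.1, hG.coloring_eq_of_adj hF.le c hf.1 hf.2
      (hF.reachable_of_adj hf.1), hax, hby⟩
  rintro f ⟨hf, hsep⟩ f' ⟨hf', hsep'⟩
  obtain ⟨a, b, rfl, hab, hc, hax, hby⟩ := hends hf hsep
  obtain ⟨a', b', rfl, hab', hc', hax', hby'⟩ := hends hf' hsep'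
  exact hG.edge_eq_of_reachable ((F.deleteEdges_le _).trans hF.le) cH hab hab' hc hc'
    (hax.trans hax'.symm) (hby.trans hby'.symm) hsep

lemma IsSpanningForest.two_mul_ncard_sdiff_le [Finite G.edgeSet] (hF : IsSpanningForest F G)
    (hG : OnlyOddCycles G) : 2 * (G.edgeSet \ F.edgeSet).ncard ≤ F.edgeSet.ncard := by
  classical
  have hfin : F.edgeSet.Finite := G.edgeSet.toFinite.subset (edgeSet_mono hF.le)
  have := hfin.to_subtype
  have hcount := Finset.card_mul_le_card_mul (Separates F) (m := 2) (n := 1)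
    (s := (G.edgeSet.toFinite.sdiff (t := F.edgeSet)).toFinset) (t := hfin.toFinset)
    (fun f hf ↦ ?above) (fun e _ ↦ ?below)
  case above =>
    induction f with | _ u v
    have huv : G.Adj u v ∧ ¬ F.Adj u v := by simpa using hf
    rw [← Set.ncard_coe_finset, Finset.coe_bipartiteAbove]
    simpa using two_le_ncard_separates hF.isAcyclic (hF.reachable_of_adj huv.1) huv.1.ne huv.2
  case below =>
    rw [Finset.card_le_one_iff_subsingleton, Finset.coe_bipartiteBelow]
    simpa using hF.subsingleton_separates hG e
  rwa [← Set.ncard_eq_toFinset_card _, ← Set.ncard_eq_toFinset_card _, mul_one, mul_comm] at hcount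

lemma IsSpanningForest.two_mul_ncard_edgeSet_le [Finite G.edgeSet] (hF : IsSpanningForest F G)
    (hG : OnlyOddCycles G) : 2 * G.edgeSet.ncard ≤ 3 * F.edgeSet.ncard := by
  have hsplit := Set.ncard_sdiff_add_ncard_of_subset (edgeSet_mono hF.le)
  have hextra := hF.two_mul_ncard_sdiff_le hG
  lia

lemma ncard_edgeSet_add_one_le_of_isAcyclic [Finite V] [Nonempty V] (hF : F.IsAcyclic) :
    F.edgeSet.ncard + 1 ≤ Nat.card V := by
  obtain ⟨T, hFT, -, hT⟩ := connected_top.exists_isTree_le_of_le_of_isAcyclic le_top hF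
  rw [← (isTree_iff_connected_and_card.mp hT).2, Nat.card_coe_set_eq]
  gcongr
  exact T.edgeSet.toFinite

theorem edge_bound_no_even_cycle_general [Finite V] [Nonempty V] (hG : OnlyOddCycles G) :
    (G.edgeSet.ncard : ℝ) ≤ 3 * ((Nat.card V : ℝ) - 1) / 2 := by
  obtain ⟨F, hF⟩ := exists_isSpanningForest G
  have hGF : 2 * (G.edgeSet.ncard : ℝ) ≤ 3 * F.edgeSet.ncard := by
    exact_mod_cast hF.two_mul_ncard_edgeSet_le hG
  have hFV : (F.edgeSet.ncard : ℝ) + 1 ≤ Nat.card V := by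
    exact_mod_cast ncard_edgeSet_add_one_le_of_isAcyclic hF.isAcyclic
  linarith

end

lemma onlyOddCycles_of_forall_not_hasCycleLen {V : Type} {G : SimpleGraph V}
    (h : ∀ l : ℕ, Even l → ¬ HasCycleLen G l) : OnlyOddCycles G :=
  fun v c hc ↦ Nat.not_even_iff_odd.mp fun heven ↦ h _ heven ⟨v, c, hc, rfl⟩

/-- Edge bound for graphs with no even cycle. -/
theorem edge_bound_no_even_cycle (n : ℕ) (hn : 1 ≤ n) (G : SimpleGraph (Fin n))
    (h : ∀ l : ℕ, Even l → ¬ HasCycleLen G l) :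
    (edgeCount G : ℝ) ≤ 3 * ((n : ℝ) - 1) / 2 := by
  have : NeZero n := ⟨by lia⟩
  simpa [edgeCount] using
    edge_bound_no_even_cycle_general (onlyOddCycles_of_forall_not_hasCycleLen h)
end

section
/- Let G be a simple graph on at least two vertices and let v be any vertex of G. Then ρ(G)² ≤ ρ(G−v)² + 2·d(v), where G−v is the graph obtained from G by deleting v (and all edges incident to v), d(v) is the degree of v in G, and ρ denotes the spectral radius. -/
open SimpleGraph

/-!
In the `ℓ²` operator norm, `‖M‖ ^ 2 = ‖M * Mᴴ‖`, and `M * Mᴴ` is the sum over the columns `c` of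
`M` of the rank-one matrices `c * cᴴ`; hence deleting a column `c` lowers `‖M‖ ^ 2` by at most
`‖c‖ ^ 2`, and by taking adjoints the same holds for rows. Deleting a vertex `v` deletes one row
and one column of the adjacency matrix, each of squared length at most `d(v)`. The operator norm of
the adjacency matrix is the spectral radius `ρ` of the graph: it is `|μ|` for some eigenvalue `μ`,
and since the entries are nonnegative, replacing an eigenvector by its entrywise absolute value in
the Rayleigh quotient gives `|μ| ≤ ρ`.
-/

open Matrix
open scoped Matrix.Norms.L2Operator

section Deletion

variable {m n : Type*} [Fintype n] [DecidableEq n]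

lemma mul_conjTranspose_eq_deleteCol_add {α : Type*} [NonUnitalNonAssocSemiring α] [Star α]
    (A : Matrix m n α) (j : n) :
    A * Aᴴ = A.submatrix id ((↑) : {k | k ≠ j} → n) * (A.submatrix id ((↑) : {k | k ≠ j} → n))ᴴ +
      replicateCol Unit (A.col j) * (replicateCol Unit (A.col j))ᴴ := by
  ext a b
  simpa [mul_apply, add_comm] using
    Fintype.sum_eq_add_sum_subtype_ne (fun k => A a k * star (A b k)) j

variable {𝕜 : Type*} [RCLike 𝕜] [Fintype m]

lemma l2_opNorm_replicateCol_sq (w : m → 𝕜) : ‖replicateCol Unit w‖ ^ 2 = ∑ i, ‖w i‖ ^ 2 := by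
  have gram : (replicateCol Unit w)ᴴ * replicateCol Unit w =
      diagonal fun _ => ((∑ i, ‖w i‖ ^ 2 : ℝ) : 𝕜) := by
    ext
    simp [mul_apply, RCLike.conj_mul]
  rw [sq, ← l2_opNorm_conjTranspose_mul_self, gram, l2_opNorm_diagonal, pi_norm_const,
    RCLike.norm_of_nonneg (by positivity)]

lemma l2_opNorm_mul_conjTranspose_self [DecidableEq m] (A : Matrix m n 𝕜) :
    ‖A * Aᴴ‖ = ‖A‖ ^ 2 := by
  have h := l2_opNorm_conjTranspose_mul_self Aᴴ
  rwa [conjTranspose_conjTranspose, l2_opNorm_conjTranspose, ← sq] at h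

lemma l2_opNorm_sq_le_deleteCol (A : Matrix m n 𝕜) (j : n) :
    ‖A‖ ^ 2 ≤ ‖A.submatrix id ((↑) : {k | k ≠ j} → n)‖ ^ 2 + ∑ i, ‖A i j‖ ^ 2 := by
  classical
  rw [← l2_opNorm_mul_conjTranspose_self A, mul_conjTranspose_eq_deleteCol_add A j]
  refine (norm_add_le _ _).trans_eq ?_
  simp only [l2_opNorm_mul_conjTranspose_self, l2_opNorm_replicateCol_sq, col_apply]

variable [DecidableEq m]

lemma l2_opNorm_sq_le_deleteRow (A : Matrix m n 𝕜) (i : m) :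
    ‖A‖ ^ 2 ≤ ‖A.submatrix ((↑) : {k | k ≠ i} → m) id‖ ^ 2 + ∑ j, ‖A i j‖ ^ 2 := by
  have h := l2_opNorm_sq_le_deleteCol Aᴴ i
  simpa only [← conjTranspose_submatrix, l2_opNorm_conjTranspose, conjTranspose_apply,
    norm_star] using h

lemma l2_opNorm_sq_le_deleteRow_deleteCol (A : Matrix m n 𝕜) (i : m) (j : n) :
    ‖A‖ ^ 2 ≤ ‖A.submatrix ((↑) : {k | k ≠ i} → m) ((↑) : {k | k ≠ j} → n)‖ ^ 2 +
      ∑ k, ‖A i k‖ ^ 2 + ∑ k, ‖A k j‖ ^ 2 := by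
  have row := l2_opNorm_sq_le_deleteRow (A.submatrix id ((↑) : {k | k ≠ j} → n)) i
  have row_le : ∑ k : {k | k ≠ j}, ‖A i k‖ ^ 2 ≤ ∑ k, ‖A i k‖ ^ 2 := by
    rw [Fintype.sum_eq_add_sum_subtype_ne _ j]
    exact le_add_of_nonneg_left (by positivity)
  calc ‖A‖ ^ 2
      ≤ ‖A.submatrix id ((↑) : {k | k ≠ j} → n)‖ ^ 2 + ∑ k, ‖A k j‖ ^ 2 :=
        l2_opNorm_sq_le_deleteCol A j
    _ ≤ ‖A.submatrix ((↑) : {k | k ≠ i} → m) ((↑) : {k | k ≠ j} → n)‖ ^ 2 +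
          ∑ k, ‖A i k‖ ^ 2 + ∑ k, ‖A k j‖ ^ 2 := by
        gcongr
        exact row.trans (add_le_add_right row_le _)

end Deletion

section Nonneg

variable {m n : Type*} [Fintype m] [Fintype n]

lemma abs_dotProduct_mulVec_le {R : Type*} [Ring R] [LinearOrder R] [IsOrderedRing R]
    {A : Matrix m n R} (hA : ∀ i j, 0 ≤ A i j) (x : m → R) (y : n → R) :
    |x ⬝ᵥ A *ᵥ y| ≤ |x| ⬝ᵥ A *ᵥ |y| := by
  simp only [dotProduct, mulVec, Pi.abs_apply]
  refine (Finset.abs_sum_le_sum_abs _ _).trans (Finset.sum_le_sum fun i _ => ?_)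
  rw [abs_mul]
  gcongr
  refine (Finset.abs_sum_le_sum_abs _ _).trans_eq (Finset.sum_congr rfl fun j _ => ?_)
  rw [abs_mul, abs_of_nonneg (hA i j)]

variable [DecidableEq n] {A : Matrix n n ℝ}

open scoped MatrixOrder in
lemma dotProduct_mulVec_le_sSup_spectrum (hA : A.IsHermitian) (x : n → ℝ) :
    x ⬝ᵥ A *ᵥ x ≤ sSup (spectrum ℝ A) * (x ⬝ᵥ x) := by
  have loewner : A ≤ algebraMap ℝ _ (sSup (spectrum ℝ A)) :=
    le_algebraMap_of_spectrum_le (fun _ => le_csSup finite_real_spectrum.bddAbove)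
      hA.isSelfAdjoint
  have h := (Matrix.le_iff.1 loewner).dotProduct_mulVec_nonneg x
  rwa [star_trivial, sub_mulVec, dotProduct_sub, sub_nonneg, Algebra.algebraMap_eq_smul_one,
    smul_mulVec, one_mulVec, dotProduct_smul, smul_eq_mul] at h

lemma abs_le_sSup_spectrum_of_nonneg (hA : A.IsHermitian) (hnonneg : ∀ i j, 0 ≤ A i j) {μ : ℝ}
    (hμ : μ ∈ spectrum ℝ A) : |μ| ≤ sSup (spectrum ℝ A) := by
  rw [← spectrum_toLin', ← Module.End.hasEigenvalue_iff_mem_spectrum] at hμ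
  obtain ⟨x, hx⟩ := hμ.exists_hasEigenvector
  have eigen : A *ᵥ x = μ • x := by simpa using hx.apply_eq_smul
  have pos : 0 < x ⬝ᵥ x := by simpa using dotProduct_star_self_pos_iff.2 hx.2
  have abs_self : |x| ⬝ᵥ |x| = x ⬝ᵥ x := by simp [dotProduct]
  refine le_of_mul_le_mul_right ?_ pos
  calc |μ| * (x ⬝ᵥ x) = |x ⬝ᵥ A *ᵥ x| := by
        rw [eigen, dotProduct_smul, smul_eq_mul, abs_mul, abs_of_pos pos]
    _ ≤ |x| ⬝ᵥ A *ᵥ |x| := abs_dotProduct_mulVec_le hnonneg x x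
    _ ≤ sSup (spectrum ℝ A) * (|x| ⬝ᵥ |x|) := dotProduct_mulVec_le_sSup_spectrum hA |x|
    _ = sSup (spectrum ℝ A) * (x ⬝ᵥ x) := by rw [abs_self]

lemma l2_opNorm_eq_sSup_spectrum_of_nonneg (hA : A.IsHermitian) (hnonneg : ∀ i j, 0 ≤ A i j) :
    ‖A‖ = sSup (spectrum ℝ A) := by
  rcases isEmpty_or_nonempty n with _ | _
  · simp [Subsingleton.elim A 0]
  · have greatest := IsometricContinuousFunctionalCalculus.isGreatest_norm_spectrum (𝕜 := ℝ) A
      hA.isSelfAdjoint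
    obtain ⟨μ, hμ, norm_eq⟩ := greatest.1
    refine le_antisymm ?_ (csSup_le ⟨μ, hμ⟩ fun ν hν => ?_)
    · exact norm_eq ▸ abs_le_sSup_spectrum_of_nonneg hA hnonneg hμ
    · exact (le_abs_self ν).trans (greatest.2 ⟨ν, hν, rfl⟩)

end Nonneg

section Graph

variable {V : Type}

lemma specRad_eq_l2_opNorm_adjMatrix [Fintype V] [DecidableEq V] (G : SimpleGraph V)
    [DecidableRel G.Adj] : specRad G = ‖G.adjMatrix ℝ‖ := by
  rw [l2_opNorm_eq_sSup_spectrum_of_nonneg (isHermitian_adjMatrix ℝ G)]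
  · unfold specRad
    congr!
  · intro u w
    rw [adjMatrix_apply]
    split_ifs <;> norm_num

lemma sum_norm_adjMatrix_sq [Fintype V] (G : SimpleGraph V) [DecidableRel G.Adj] (v : V) :
    ∑ u, ‖G.adjMatrix ℝ v u‖ ^ 2 = degCount G v := by
  classical
  simp [degCount, adjMatrix_apply, apply_ite]

theorem specRad_sq_le_delete_vertex_general [Finite V] (G : SimpleGraph V) (v : V) :
    specRad G ^ 2 ≤ specRad (G.induce {u | u ≠ v}) ^ 2 + 2 * (degCount G v : ℝ) := by
  classical
  have := Fintype.ofFinite V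
  have submatrix_eq : (G.adjMatrix ℝ).submatrix (↑) (↑) = (G.induce {u | u ≠ v}).adjMatrix ℝ :=
    (Embedding.induce {u | u ≠ v}).submatrix_adjMatrix ℝ
  have column : ∑ u, ‖G.adjMatrix ℝ u v‖ ^ 2 = degCount G v := by
    simp only [← sum_norm_adjMatrix_sq G v, G.isSymm_adjMatrix.apply v]
  calc specRad G ^ 2 = ‖G.adjMatrix ℝ‖ ^ 2 := by rw [specRad_eq_l2_opNorm_adjMatrix]
    _ ≤ ‖(G.induce {u | u ≠ v}).adjMatrix ℝ‖ ^ 2 + ∑ u, ‖G.adjMatrix ℝ v u‖ ^ 2 +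
          ∑ u, ‖G.adjMatrix ℝ u v‖ ^ 2 :=
        submatrix_eq ▸ l2_opNorm_sq_le_deleteRow_deleteCol (G.adjMatrix ℝ) v v
    _ = specRad (G.induce {u | u ≠ v}) ^ 2 + 2 * degCount G v := by
        rw [specRad_eq_l2_opNorm_adjMatrix, sum_norm_adjMatrix_sq, column]
        ring

end Graph

/-- Lemma 4.6: `ρ(G)² ≤ ρ(G - v)² + 2·d(v)`. -/
theorem specRad_sq_le_delete_vertex (n : ℕ) (hn : 2 ≤ n) (G : SimpleGraph (Fin n))
    (v : Fin n) :
    specRad G ^ 2 ≤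
      specRad (G.induce {u : Fin n | u ≠ v}) ^ 2 + 2 * (degCount G v : ℝ) :=
  specRad_sq_le_delete_vertex_general G v
end
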